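/- arXiv:2605.23283 — 3 statements merged into one kernel-verified Lean document; each statement's English description precedes it below -/
import Mathlib

section
/- Let G be a finite simple connected graph on n ≥ 2 vertices. Then q(G) = 2n(1 − 1/ω(G)) holds if and only if: either ω(G) = 2 and G is a complete bipartite graph, or ω(G) ≥ 3 and G is a complete ω(G)-partite graph all of whose parts have the same size (i.e., the vertex set can be partitioned into ω(G) independent sets, with every pair of vertices from different parts adjacent, the parts having equal sizes when ω(G) ≥ 3). -/
open scoped Classical
open Finset

variable {V : Type*}

noncomputable def adjMx [Fintype V] (G : SimpleGraph V) : Matrix V V ℝ :=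
  Matrix.of fun u v => if G.Adj u v then 1 else 0

noncomputable def degMx [Fintype V] [DecidableEq V] (G : SimpleGraph V) : Matrix V V ℝ :=
  Matrix.diagonal fun v => ∑ u, if G.Adj v u then (1 : ℝ) else 0

noncomputable def signlessLap [Fintype V] [DecidableEq V] (G : SimpleGraph V) : Matrix V V ℝ :=
  degMx G + adjMx G

lemma adjMx_isHermitian [Fintype V] (G : SimpleGraph V) : (adjMx G).IsHermitian := by
  ext u v
  simp [adjMx, Matrix.conjTranspose_apply, SimpleGraph.adj_comm]

lemma signlessLap_isHermitian [Fintype V] [DecidableEq V] (G : SimpleGraph V) :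
    (signlessLap G).IsHermitian :=
  (Matrix.isHermitian_diagonal _).add (adjMx_isHermitian G)

noncomputable def maxEig [Fintype V] [DecidableEq V] {A : Matrix V V ℝ}
    (hA : A.IsHermitian) : ℝ := ⨆ v, hA.eigenvalues v

noncomputable def qIndex [Fintype V] [DecidableEq V] (G : SimpleGraph V) : ℝ :=
  maxEig (signlessLap_isHermitian G)

noncomputable def lambda1 [Fintype V] [DecidableEq V] (G : SimpleGraph V) : ℝ :=
  maxEig (adjMx_isHermitian G)

/-- Maximum size of a clique of `G` containing vertex `v`. -/
noncomputable def cliqueAt (G : SimpleGraph V) (v : V) : ℕ :=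
  sSup {n | ∃ s : Finset V, G.IsNClique n s ∧ v ∈ s}

/-- Maximum size of a clique of `G` containing both `u` and `v`. -/
noncomputable def cliqueAtEdge (G : SimpleGraph V) (u v : V) : ℕ :=
  sSup {n | ∃ s : Finset V, G.IsNClique n s ∧ u ∈ s ∧ v ∈ s}

open scoped Matrix

/-!
For a vector `x`, put `T = ∑ x_v²` and `z_v = n x_v² + T`, so that `∑ z_v = 2 n T`. The identity
`z_u z_v = n T (x_u + x_v)² + (n x_u x_v - T)²`, summed over the edges, compares the quadratic form
of `Q(G)` at `x` with the form of `A(G)` at `z`, and the Motzkin–Straus inequality for `z` turns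
into `q(G) ≤ 2 n (1 - 1 / ω(G))`.

In case of equality, `z` is a zero of the copositive form `B = (1 - 1 / ω(G)) J - A(G)` with all
entries positive, and `n x_u x_v = T` on every edge. Copositivity near `z` forces `B` to be positive
semidefinite. For nonadjacent `u` and `v` the vector `e_u - e_v` is then in the kernel of `B`, so
that `u` and `v` have the same neighbors and `G` is complete multipartite. If `ω(G) ≥ 3`, every
vertex lies in a triangle, where the edge conditions give `n x_u² = T`; thus `z` is constant and
`B z = 0` says that `G` is regular. Conversely, if the degrees of adjacent vertices add up to
`2 n (1 - 1 / ω(G))`, then the degree vector is an eigenvector for that value.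
-/

/-- A real matrix is copositive if its quadratic form is nonnegative on nonnegative vectors. -/
def IsCopositive [Fintype V] (A : Matrix V V ℝ) : Prop :=
  ∀ x : V → ℝ, (∀ v, 0 ≤ x v) → 0 ≤ x ⬝ᵥ A *ᵥ x

theorem IsCopositive.posSemidef [Fintype V] {A : Matrix V V ℝ} (hA : IsCopositive A)
    (hherm : A.IsHermitian) {z : V → ℝ} (hz : ∀ v, 0 < z v) (hzero : z ⬝ᵥ A *ᵥ z = 0) :
    A.PosSemidef := by
  refine .of_dotProduct_mulVec_nonneg hherm fun x ↦ ?_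
  have hopen : IsOpen {y : V → ℝ | ∀ v, 0 < y v} := by
    simpa only [Set.ofPred_forall] using
      isOpen_iInter_of_finite fun v ↦ isOpen_lt continuous_const (continuous_apply v)
  have hpos (y : V → ℝ) : ∀ᶠ t : ℝ in nhdsWithin 0 (Set.Ioi 0), ∀ v, 0 < (z + t • y) v := by
    have hcont : ContinuousAt (fun t : ℝ ↦ z + t • y) 0 := by fun_prop
    exact (hcont.mono_left nhdsWithin_le_nhds).eventually_mem (hopen.mem_nhds (by simpa using hz))
  obtain ⟨t, ⟨hplus, hminus⟩, ht⟩ :=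
    ((hpos x).and (hpos (-x)) |>.and self_mem_nhdsWithin).exists
  have hparallelogram : (z + t • x) ⬝ᵥ A *ᵥ (z + t • x) + (z + t • -x) ⬝ᵥ A *ᵥ (z + t • -x) =
      2 * t ^ 2 * (x ⬝ᵥ A *ᵥ x) := by
    simp only [Matrix.mulVec_add, Matrix.mulVec_smul, Matrix.mulVec_neg, add_dotProduct,
      dotProduct_add, smul_dotProduct, dotProduct_smul, neg_dotProduct, dotProduct_neg,
      smul_eq_mul, hzero]
    ring
  have hsum := add_nonneg (hA _ fun v ↦ (hplus v).le) (hA _ fun v ↦ (hminus v).le)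
  rw [hparallelogram] at hsum
  exact nonneg_of_mul_nonneg_right hsum (mul_pos two_pos (pow_pos ht 2))

section MaxEig

variable [Fintype V] [DecidableEq V] {A : Matrix V V ℝ} (hA : A.IsHermitian)

theorem exists_mulVec_eq_maxEig_smul [Nonempty V] :
    ∃ x : V → ℝ, x ≠ 0 ∧ A *ᵥ x = maxEig hA • x := by
  obtain ⟨i, hi⟩ := exists_eq_ciSup_of_finite (f := hA.eigenvalues)
  refine ⟨hA.eigenvectorBasis i, ?_, by rw [hA.mulVec_eigenvectorBasis, hi, maxEig]⟩
  simpa using hA.eigenvectorBasis.orthonormal.ne_zero i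

theorem le_maxEig_of_mulVec_eq_smul {x : V → ℝ} (hx : x ≠ 0) {r : ℝ} (h : A *ᵥ x = r • x) :
    r ≤ maxEig hA := by
  have heigen : Module.End.HasEigenvector A.toLin' r x :=
    Module.End.hasEigenvector_iff.2 ⟨Module.End.mem_eigenspace_iff.2 (by simpa using h), hx⟩
  have hmem := (Module.End.hasEigenvalue_of_hasEigenvector heigen).mem_spectrum
  rw [Matrix.spectrum_toLin', hA.spectrum_real_eq_range_eigenvalues] at hmem
  obtain ⟨i, rfl⟩ := hmem
  exact le_ciSup (Set.finite_range _).bddAbove i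

end MaxEig

section MotzkinStraus

variable (G : SimpleGraph V)

/-- Weighted count of the pairs `(u, v) ∈ s × t` with `u` adjacent to `v`, the pair `(u, v)` having
weight `z u * z v`. Edges inside `s ∩ t` are counted twice. -/
noncomputable def interedgeWeight (z : V → ℝ) (s t : Finset V) : ℝ :=
  ∑ u ∈ s, ∑ v ∈ t with G.Adj u v, z u * z v

variable {G} {z : V → ℝ}

lemma interedgeWeight_comm (s t : Finset V) :
    interedgeWeight G z s t = interedgeWeight G z t s := by
  simp only [interedgeWeight, sum_filter]
  rw [sum_comm]
  simp only [G.adj_comm, mul_comm]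

lemma interedgeWeight_filter_add_filter_not (p : V → Prop) (s t : Finset V) :
    interedgeWeight G z {u ∈ s | p u} t + interedgeWeight G z {u ∈ s | ¬ p u} t =
      interedgeWeight G z s t :=
  sum_filter_add_sum_filter_not s p _

lemma interedgeWeight_mono_right (hz : ∀ v, 0 ≤ z v) (s : Finset V) {t t' : Finset V}
    (h : t ⊆ t') : interedgeWeight G z s t ≤ interedgeWeight G z s t' :=
  sum_le_sum fun _ _ ↦ sum_le_sum_of_subset_of_nonneg (filter_subset_filter _ h)
    fun _ _ _ ↦ mul_nonneg (hz _) (hz _)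

lemma interedgeWeight_le_of_forall_sum_adj_le (hz : ∀ v, 0 ≤ z v) {s t : Finset V} {D : ℝ}
    (hD : ∀ u ∈ s, ∑ v ∈ t with G.Adj u v, z v ≤ D) :
    interedgeWeight G z s t ≤ D * ∑ u ∈ s, z u := by
  simp only [interedgeWeight, ← mul_sum]
  rw [mul_comm, sum_mul]
  exact sum_le_sum fun u hu ↦ mul_le_mul_of_nonneg_left (hD u hu) (hz u)

-- Erdős's proof of Turán's theorem: each vertex of `s` outside the neighborhood of `v` is joined
-- to neighbors of total weight at most that of the neighbors of `v`.
lemma interedgeWeight_le_of_maximal (hz : ∀ v, 0 ≤ z v) {s : Finset V} {v : V}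
    (hmax : ∀ u ∈ s, ∑ w ∈ s with G.Adj u w, z w ≤ ∑ w ∈ s with G.Adj v w, z w) :
    interedgeWeight G z s s ≤
      interedgeWeight G z {w ∈ s | G.Adj v w} {w ∈ s | G.Adj v w} +
        2 * ((∑ w ∈ s with G.Adj v w, z w) *
          (∑ w ∈ s, z w - ∑ w ∈ s with G.Adj v w, z w)) := by
  set N := {w ∈ s | G.Adj v w}
  set C := {w ∈ s | ¬ G.Adj v w}
  have hs := interedgeWeight_filter_add_filter_not (G := G) (z := z) (G.Adj v) s s
  have hN := interedgeWeight_filter_add_filter_not (G := G) (z := z) (G.Adj v) s N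
  have hCN : interedgeWeight G z C N ≤ interedgeWeight G z C s :=
    interedgeWeight_mono_right hz C (filter_subset _ s)
  have hC : interedgeWeight G z C s ≤ (∑ w ∈ N, z w) * ∑ w ∈ C, z w :=
    interedgeWeight_le_of_forall_sum_adj_le hz fun u hu ↦ hmax u (mem_of_mem_filter u hu)
  rw [interedgeWeight_comm s N] at hN
  rw [← sum_filter_add_sum_filter_not s (G.Adj v) z, add_sub_cancel_left]
  linarith

lemma interedgeWeight_le_of_cliqueFreeOn (hz : ∀ v, 0 ≤ z v) (k : ℕ) (s : Finset V)
    (hs : G.CliqueFreeOn s (k + 2)) :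
    interedgeWeight G z s s ≤ k / (k + 1) * (∑ u ∈ s, z u) ^ 2 := by
  induction k generalizing s with
  | zero =>
    have hnonadj (u) (hu : u ∈ s) : {v ∈ s | G.Adj u v} = ∅ :=
      filter_eq_empty_iff.2 fun v hv h ↦ (SimpleGraph.cliqueFreeOn_two G).1 hs hu hv h.ne h
    simp [interedgeWeight, sum_congr rfl fun u hu ↦ congrArg (fun t ↦ ∑ v ∈ t, z u * z v)
      (hnonadj u hu)]
  | succ k ih =>
    obtain rfl | hne := s.eq_empty_or_nonempty
    · simp [interedgeWeight]
    obtain ⟨v, hv, hmax⟩ := s.exists_max_image (fun u ↦ ∑ w ∈ s with G.Adj u w, z w) hne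
    have hfree : G.CliqueFreeOn ({w ∈ s | G.Adj v w} : Finset V) (k + 2) := by
      simpa [Set.inter_def] using SimpleGraph.CliqueFreeOn.of_succ G hs hv
    have hsplit := interedgeWeight_le_of_maximal hz hmax
    have hN := ih _ hfree
    set W := ∑ w ∈ s, z w
    set D := ∑ w ∈ s with G.Adj v w, z w
    calc interedgeWeight G z s s ≤ (k : ℝ) / (k + 1) * D ^ 2 + 2 * (D * (W - D)) := by linarith
      _ = (k + 1 : ℝ) / (k + 2) * W ^ 2
          - (k + 1 : ℝ) / (k + 2) * (W - (k + 2) / (k + 1) * D) ^ 2 := by field_simp; ring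
      _ ≤ (k + 1 : ℝ) / (k + 2) * W ^ 2 := sub_le_self _ (by positivity)
      _ = ((k + 1 : ℕ) : ℝ) / ((k + 1 : ℕ) + 1) * W ^ 2 := by push_cast; ring

theorem motzkin_straus [Fintype V] (hz : ∀ v, 0 ≤ z v) :
    interedgeWeight G z univ univ ≤ (1 - 1 / (G.cliqueNum : ℝ)) * (∑ v, z v) ^ 2 := by
  obtain hV | hV := isEmpty_or_nonempty V
  · simp [interedgeWeight]
  obtain ⟨k, hk⟩ : ∃ k, G.cliqueNum = k + 1 := by
    have hsingle : G.IsClique ({Classical.arbitrary V} : Finset V) := by simp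
    exact Nat.exists_eq_add_one.2 (hsingle.card_le_cliqueNum)
  have hfree : G.CliqueFreeOn (univ : Finset V) (k + 2) := fun t _ ht ↦ by
    have := ht.isClique.card_le_cliqueNum
    rw [ht.card_eq] at this
    lia
  refine (interedgeWeight_le_of_cliqueFreeOn hz k univ hfree).trans_eq ?_
  rw [hk]
  push_cast
  field_simp
  ring

end MotzkinStraus

section SignlessLap

variable [Fintype V] (G : SimpleGraph V) (x : V → ℝ)

lemma adjMx_mulVec_apply (u : V) : (adjMx G *ᵥ x) u = ∑ v with G.Adj u v, x v := by
  simp [adjMx, Matrix.mulVec, dotProduct, sum_filter]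

lemma signlessLap_mulVec_apply [DecidableEq V] (u : V) :
    (signlessLap G *ᵥ x) u = ∑ v with G.Adj u v, (x u + x v) := by
  simp [signlessLap, degMx, Matrix.add_mulVec, Matrix.mulVec_diagonal, adjMx_mulVec_apply,
    sum_add_distrib]

lemma two_mul_dotProduct_signlessLap_mulVec [DecidableEq V] :
    2 * (x ⬝ᵥ signlessLap G *ᵥ x) = ∑ u, ∑ v with G.Adj u v, (x u + x v) ^ 2 := by
  have hform : x ⬝ᵥ signlessLap G *ᵥ x = ∑ u, ∑ v with G.Adj u v, x u * (x u + x v) := by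
    simp only [dotProduct, signlessLap_mulVec_apply, mul_sum]
  have hswap : x ⬝ᵥ signlessLap G *ᵥ x = ∑ u, ∑ v with G.Adj u v, x v * (x u + x v) := by
    rw [hform]
    simp only [sum_filter]
    rw [sum_comm]
    simp only [G.adj_comm, add_comm]
  rw [two_mul]
  nth_rw 1 [hform]
  rw [hswap]
  simp only [← sum_add_distrib, ← add_mul, sq]

variable {G}

lemma le_qIndex_of_degree_add_degree_eq [DecidableEq V] (hG : G ≠ ⊥) {r : ℝ}
    (h : ∀ u v, G.Adj u v → (G.degree u + G.degree v : ℝ) = r) : r ≤ qIndex G := by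
  obtain ⟨u, v, huv⟩ := SimpleGraph.ne_bot_iff_exists_adj.1 hG
  have hne : (fun w ↦ (G.degree w : ℝ)) ≠ 0 := fun h0 ↦
    huv.degree_pos_left.ne' (Nat.cast_eq_zero.1 (congrFun h0 u))
  refine le_maxEig_of_mulVec_eq_smul _ hne (funext fun w ↦ ?_)
  have hsum : ∑ v with G.Adj w v, (G.degree w + G.degree v : ℝ) = ∑ v with G.Adj w v, r :=
    sum_congr rfl fun v hv ↦ h w v (mem_filter_univ v |>.1 hv)
  rw [signlessLap_mulVec_apply, hsum, sum_const, nsmul_eq_mul, ← G.neighborFinset_eq_filter,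
    G.card_neighborFinset_eq_degree, Pi.smul_apply, smul_eq_mul, mul_comm]

end SignlessLap

section MotzkinStrausMatrix

variable [Fintype V] (G : SimpleGraph V)

/-- The matrix `(1 - 1 / ω(G)) J - A(G)`, with `J` the all-ones matrix: the Motzkin–Straus theorem
says that it is copositive. -/
noncomputable def motzkinStrausMx : Matrix V V ℝ :=
  Matrix.of (fun _ _ ↦ 1 - 1 / (G.cliqueNum : ℝ)) - adjMx G

lemma motzkinStrausMx_isHermitian : (motzkinStrausMx G).IsHermitian :=
  Matrix.IsHermitian.sub (Matrix.IsHermitian.ext fun _ _ ↦ rfl) (adjMx_isHermitian G)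

lemma motzkinStrausMx_mulVec_apply (z : V → ℝ) (u : V) :
    (motzkinStrausMx G *ᵥ z) u =
      (1 - 1 / (G.cliqueNum : ℝ)) * ∑ v, z v - ∑ v with G.Adj u v, z v := by
  rw [motzkinStrausMx, Matrix.sub_mulVec, Pi.sub_apply, adjMx_mulVec_apply, mul_sum]
  rfl

lemma dotProduct_motzkinStrausMx_mulVec (z : V → ℝ) :
    z ⬝ᵥ motzkinStrausMx G *ᵥ z =
      (1 - 1 / (G.cliqueNum : ℝ)) * (∑ v, z v) ^ 2 - interedgeWeight G z univ univ := by
  simp only [dotProduct, motzkinStrausMx_mulVec_apply, interedgeWeight, mul_sub, sum_sub_distrib,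
    ← sum_mul, ← mul_sum]
  ring

theorem motzkinStrausMx_isCopositive : IsCopositive (motzkinStrausMx G) := fun z hz ↦ by
  rw [dotProduct_motzkinStrausMx_mulVec]
  exact sub_nonneg.2 (motzkin_straus hz)

variable {G}

lemma isCompleteMultipartite_of_posSemidef_motzkinStrausMx
    (h : (motzkinStrausMx G).PosSemidef) : G.IsCompleteMultipartite := by
  have hrow {u v : V} (huv : ¬ G.Adj u v) (w : V) : G.Adj w u ↔ G.Adj w v := by
    set e : V → ℝ := Pi.single u 1 - Pi.single v 1
    have hkernel : motzkinStrausMx G *ᵥ e = 0 := by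
      rw [← h.dotProduct_mulVec_zero_iff]
      simp [e, Matrix.mulVec_sub, sub_dotProduct, motzkinStrausMx, adjMx, huv, mt G.adj_symm huv]
    have hentry : adjMx G w u = adjMx G w v := by
      simpa [e, Matrix.mulVec_sub, motzkinStrausMx, sub_eq_zero, eq_comm] using congrFun hkernel w
    by_cases hu : G.Adj w u <;> by_cases hv : G.Adj w v <;> simp_all [adjMx]
  exact ⟨fun u v w huv hvw ↦ by rwa [hrow hvw] at huv⟩

end MotzkinStrausMatrix

section Rayleigh

variable [Fintype V] (G : SimpleGraph V) (x : V → ℝ)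

/-- The vertex weights `n x_v² + ‖x‖²` at which the Motzkin–Straus form is evaluated to bound the
signless Laplacian form at `x`. -/
noncomputable def rayleighWeight (v : V) : ℝ :=
  Fintype.card V * x v ^ 2 + x ⬝ᵥ x

lemma sum_rayleighWeight :
    ∑ v, rayleighWeight x v = 2 * Fintype.card V * (x ⬝ᵥ x) := by
  have hsq : ∑ v, x v ^ 2 = x ⬝ᵥ x := by simp only [dotProduct, sq]
  simp only [rayleighWeight, sum_add_distrib, ← mul_sum, hsq, sum_const, card_univ, nsmul_eq_mul]
  ring

variable {x} in
lemma rayleighWeight_pos (hx : x ≠ 0) (v : V) : 0 < rayleighWeight x v :=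
  add_pos_of_nonneg_of_pos (by positivity) (Matrix.dotProduct_self_star_pos_iff.2 hx)

variable [DecidableEq V]

lemma interedgeWeight_rayleighWeight :
    interedgeWeight G (rayleighWeight x) univ univ =
      2 * Fintype.card V * (x ⬝ᵥ x) * (x ⬝ᵥ signlessLap G *ᵥ x) +
        ∑ u, ∑ v with G.Adj u v, (Fintype.card V * (x u * x v) - x ⬝ᵥ x) ^ 2 := by
  have hprod (u v : V) : rayleighWeight x u * rayleighWeight x v =
      Fintype.card V * (x ⬝ᵥ x) * (x u + x v) ^ 2 +
        (Fintype.card V * (x u * x v) - x ⬝ᵥ x) ^ 2 := by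
    rw [rayleighWeight, rayleighWeight]
    ring
  simp only [interedgeWeight, hprod, sum_add_distrib, ← mul_sum,
    ← two_mul_dotProduct_signlessLap_mulVec]
  ring

lemma rayleigh_gap_eq :
    2 * Fintype.card V * (x ⬝ᵥ x) *
        (2 * Fintype.card V * (1 - 1 / (G.cliqueNum : ℝ)) * (x ⬝ᵥ x) - x ⬝ᵥ signlessLap G *ᵥ x) =
      rayleighWeight x ⬝ᵥ motzkinStrausMx G *ᵥ rayleighWeight x +
        ∑ u, ∑ v with G.Adj u v, (Fintype.card V * (x u * x v) - x ⬝ᵥ x) ^ 2 := by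
  rw [dotProduct_motzkinStrausMx_mulVec, sum_rayleighWeight, interedgeWeight_rayleighWeight]
  ring

theorem dotProduct_signlessLap_mulVec_le :
    x ⬝ᵥ signlessLap G *ᵥ x ≤
      2 * Fintype.card V * (1 - 1 / (G.cliqueNum : ℝ)) * (x ⬝ᵥ x) := by
  obtain rfl | hx := eq_or_ne x 0
  · simp
  have hT : 0 < x ⬝ᵥ x := Matrix.dotProduct_self_star_pos_iff.2 hx
  have hn : (0 : ℝ) < Fintype.card V :=
    Nat.cast_pos.2 (Fintype.card_pos_iff.2 (Function.ne_iff.1 hx).nonempty)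
  have hform := motzkinStrausMx_isCopositive G _ fun v ↦ (rayleighWeight_pos hx v).le
  have hgap : 0 ≤ 2 * Fintype.card V * (x ⬝ᵥ x) *
      (2 * Fintype.card V * (1 - 1 / (G.cliqueNum : ℝ)) * (x ⬝ᵥ x) -
        x ⬝ᵥ signlessLap G *ᵥ x) := by
    rw [rayleigh_gap_eq]
    positivity
  exact sub_nonneg.1 (nonneg_of_mul_nonneg_right hgap (by positivity))

end Rayleigh

theorem qIndex_le [Fintype V] [DecidableEq V] [Nonempty V] (G : SimpleGraph V) :
    qIndex G ≤ 2 * Fintype.card V * (1 - 1 / (G.cliqueNum : ℝ)) := by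
  obtain ⟨x, hx, heig⟩ := exists_mulVec_eq_maxEig_smul (signlessLap_isHermitian G)
  have hle := dotProduct_signlessLap_mulVec_le G x
  rw [heig, dotProduct_smul, smul_eq_mul] at hle
  exact le_of_mul_le_mul_right hle (Matrix.dotProduct_self_star_pos_iff.2 hx)

section Extremal

variable [Fintype V] [DecidableEq V] {G : SimpleGraph V} {x : V → ℝ}

/-- A nonzero vector attaining equality in `dotProduct_signlessLap_mulVec_le`. When `q(G)` equals
`2 n (1 - 1 / ω(G))`, its eigenvectors are such vectors. -/
structure IsExtremal (G : SimpleGraph V) (x : V → ℝ) : Prop where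
  ne_zero : x ≠ 0
  form_eq : x ⬝ᵥ signlessLap G *ᵥ x =
    2 * Fintype.card V * (1 - 1 / (G.cliqueNum : ℝ)) * (x ⬝ᵥ x)

lemma exists_isExtremal_of_qIndex_eq [Nonempty V]
    (h : qIndex G = 2 * Fintype.card V * (1 - 1 / (G.cliqueNum : ℝ))) : ∃ x, IsExtremal G x := by
  obtain ⟨x, hx, heig⟩ := exists_mulVec_eq_maxEig_smul (signlessLap_isHermitian G)
  refine ⟨x, hx, ?_⟩
  rw [heig, dotProduct_smul, smul_eq_mul, ← h, qIndex]

namespace IsExtremal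

lemma dotProduct_motzkinStrausMx_mulVec_eq_zero (hx : IsExtremal G x) :
    rayleighWeight x ⬝ᵥ motzkinStrausMx G *ᵥ rayleighWeight x = 0 := by
  have hform := motzkinStrausMx_isCopositive G _ fun v ↦ (rayleighWeight_pos hx.ne_zero v).le
  have hgap := rayleigh_gap_eq G x
  rw [hx.form_eq, sub_self, mul_zero] at hgap
  exact (add_eq_zero_iff_of_nonneg hform (by positivity)).1 hgap.symm |>.1

lemma card_mul_mul_eq (hx : IsExtremal G x) {u v : V} (huv : G.Adj u v) :
    Fintype.card V * (x u * x v) = x ⬝ᵥ x := by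
  have hsum := rayleigh_gap_eq G x
  rw [hx.form_eq, sub_self, mul_zero, hx.dotProduct_motzkinStrausMx_mulVec_eq_zero, zero_add,
    eq_comm, sum_eq_zero_iff_of_nonneg fun _ _ ↦ by positivity] at hsum
  have hrow := hsum u (mem_univ u)
  rw [sum_eq_zero_iff_of_nonneg fun _ _ ↦ by positivity] at hrow
  exact sub_eq_zero.1 (sq_eq_zero_iff.1 (hrow v (by simpa using huv)))

lemma posSemidef_motzkinStrausMx (hx : IsExtremal G x) : (motzkinStrausMx G).PosSemidef :=
  (motzkinStrausMx_isCopositive G).posSemidef (motzkinStrausMx_isHermitian G)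
    (rayleighWeight_pos hx.ne_zero) hx.dotProduct_motzkinStrausMx_mulVec_eq_zero

lemma sum_adj_rayleighWeight (hx : IsExtremal G x) (u : V) :
    ∑ v with G.Adj u v, rayleighWeight x v =
      (1 - 1 / (G.cliqueNum : ℝ)) * ∑ v, rayleighWeight x v := by
  have hkernel := congrFun (hx.posSemidef_motzkinStrausMx.dotProduct_mulVec_zero_iff _ |>.1
    hx.dotProduct_motzkinStrausMx_mulVec_eq_zero) u
  rw [motzkinStrausMx_mulVec_apply] at hkernel
  exact (sub_eq_zero.1 hkernel).symm

lemma card_mul_sq_eq (hx : IsExtremal G x) {u v w : V} (huv : G.Adj u v) (huw : G.Adj u w)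
    (hvw : G.Adj v w) : Fintype.card V * x u ^ 2 = x ⬝ᵥ x := by
  have hT : 0 < x ⬝ᵥ x := Matrix.dotProduct_self_star_pos_iff.2 hx.ne_zero
  refine mul_right_cancel₀ hT.ne' ?_
  calc Fintype.card V * x u ^ 2 * (x ⬝ᵥ x)
      = Fintype.card V * x u ^ 2 * (Fintype.card V * (x v * x w)) := by
        rw [hx.card_mul_mul_eq hvw]
    _ = Fintype.card V * (x u * x v) * (Fintype.card V * (x u * x w)) := by ring
    _ = x ⬝ᵥ x * (x ⬝ᵥ x) := by rw [hx.card_mul_mul_eq huv, hx.card_mul_mul_eq huw]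

lemma degree_eq (hx : IsExtremal G x) (htri : ∀ u, ∃ v w, G.Adj u v ∧ G.Adj u w ∧ G.Adj v w)
    (u : V) : (G.degree u : ℝ) = (1 - 1 / (G.cliqueNum : ℝ)) * Fintype.card V := by
  have hT : 0 < x ⬝ᵥ x := Matrix.dotProduct_self_star_pos_iff.2 hx.ne_zero
  have hconst (v : V) : rayleighWeight x v = 2 * (x ⬝ᵥ x) := by
    obtain ⟨w, y, hvw, hvy, hwy⟩ := htri v
    rw [rayleighWeight, hx.card_mul_sq_eq hvw hvy hwy, two_mul]
  have hsum := hx.sum_adj_rayleighWeight u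
  simp only [hconst, sum_const, nsmul_eq_mul, card_univ] at hsum
  rw [← G.neighborFinset_eq_filter, G.card_neighborFinset_eq_degree,
    ← mul_assoc _ _ (2 * _)] at hsum
  exact mul_right_cancel₀ (mul_pos two_pos hT).ne' hsum

end IsExtremal

end Extremal

lemma two_le_cliqueNum_of_ne_bot [Finite V] {G : SimpleGraph V} (hG : G ≠ ⊥) :
    2 ≤ G.cliqueNum := by
  obtain ⟨u, v, huv⟩ := SimpleGraph.ne_bot_iff_exists_adj.1 hG
  have hclique : G.IsClique ({u, v} : Finset V) := by simp [huv]
  simpa [card_pair huv.ne] using hclique.card_le_cliqueNum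

section Multipartite

variable {G : SimpleGraph V}

lemma exists_surjective_adj_iff_ne [Finite V] (h : G.IsCompleteMultipartite) :
    ∃ f : V → Fin G.cliqueNum, Function.Surjective f ∧ ∀ u v, G.Adj u v ↔ f u ≠ f v := by
  have := Fintype.ofFinite V
  let S := h.setoid
  have hrel (u v : V) : (⟦u⟧ : Quotient S) = ⟦v⟧ ↔ ¬ G.Adj u v := Quotient.eq
  have hle : Fintype.card (Quotient S) ≤ G.cliqueNum := by
    have hclique : G.IsClique (univ.image (Quotient.out (s := S)) : Finset V) := by
      simp only [coe_image, coe_univ, Set.image_univ]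
      rintro _ ⟨p, rfl⟩ _ ⟨q, rfl⟩ hpq
      by_contra hadj
      simp only [← hrel, Quotient.out_eq] at hadj
      exact hpq (congrArg _ hadj)
    simpa [card_image_of_injective _ Quotient.out_injective] using hclique.card_le_cliqueNum
  have hge : G.cliqueNum ≤ Fintype.card (Quotient S) := by
    obtain ⟨s, hs⟩ := G.exists_isNClique_cliqueNum
    rw [← hs.card_eq, ← card_univ]
    refine card_le_card_of_injOn (Quotient.mk S) (fun _ _ ↦ mem_coe.2 (mem_univ _)) ?_
    intro u hu v hv huv
    by_contra hne
    exact (hrel u v).1 huv (hs.isClique hu hv hne)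
  let e := Fintype.equivFinOfCardEq (hle.antisymm hge)
  exact ⟨fun v ↦ e ⟦v⟧, e.surjective.comp Quotient.mk_surjective,
    fun u v ↦ by rw [Ne, e.apply_eq_iff_eq, hrel, not_not]⟩

lemma exists_triangle_of_surjective {k : ℕ} (hk : 3 ≤ k) {f : V → Fin k}
    (hf : Function.Surjective f) (hadj : ∀ u v, G.Adj u v ↔ f u ≠ f v) (u : V) :
    ∃ v w, G.Adj u v ∧ G.Adj u w ∧ G.Adj v w := by
  obtain ⟨i, hi, -⟩ := Fin.exists_ne_and_ne_of_two_lt (f u) (f u) hk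
  obtain ⟨j, hju, hji⟩ := Fin.exists_ne_and_ne_of_two_lt (f u) i hk
  obtain ⟨v, rfl⟩ := hf i
  obtain ⟨w, rfl⟩ := hf j
  exact ⟨v, w, (hadj u v).2 hi.symm, (hadj u w).2 hju.symm, (hadj v w).2 hji.symm⟩

variable [Fintype V]

lemma degree_add_card_fiber {ι : Type*} [DecidableEq ι] {f : V → ι}
    (hadj : ∀ u v, G.Adj u v ↔ f u ≠ f v) (u : V) :
    G.degree u + #{v | f v = f u} = Fintype.card V := by
  have hdeg : G.degree u = #{v | ¬ f v = f u} := by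
    rw [← G.card_neighborFinset_eq_degree, G.neighborFinset_eq_filter]
    simp only [hadj, ne_comm, ne_eq]
  rw [hdeg, add_comm, card_filter_add_card_filter_not, card_univ]

lemma degree_add_degree_of_bipartition {f : V → Fin 2} (hadj : ∀ u v, G.Adj u v ↔ f u ≠ f v)
    {u v : V} (huv : G.Adj u v) : G.degree u + G.degree v = Fintype.card V := by
  have hdeg : G.degree u = #{w | f w = f v} := by
    rw [← G.card_neighborFinset_eq_degree, G.neighborFinset_eq_filter]
    refine congrArg card (filter_congr fun w _ ↦ ?_)
    rw [hadj] at huv ⊢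
    lia
  rw [hdeg, add_comm, degree_add_card_fiber hadj v]

lemma degree_eq_of_card_fiber_eq {ι : Type*} [Fintype ι] [DecidableEq ι] {f : V → ι}
    (hadj : ∀ u v, G.Adj u v ↔ f u ≠ f v) (hf : ∀ i j, #{v | f v = i} = #{v | f v = j}) (u : V) :
    (G.degree u : ℝ) = (1 - 1 / (Fintype.card ι : ℝ)) * Fintype.card V := by
  have hfiber : Fintype.card V = Fintype.card ι * #{v | f v = f u} := by
    rw [← card_univ (α := V), card_eq_sum_card_fiberwise (f := f) (t := univ) (by simp),
      sum_congr rfl fun i _ ↦ hf i (f u), sum_const, card_univ, smul_eq_mul]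
  have hι : (Fintype.card ι : ℝ) ≠ 0 := Nat.cast_ne_zero.2 (Fintype.card_pos_iff.2 ⟨f u⟩).ne'
  have hdeg : (G.degree u : ℝ) + #{v | f v = f u} = Fintype.card V :=
    mod_cast degree_add_card_fiber hadj u
  rw [eq_sub_of_add_eq hdeg, hfiber]
  push_cast
  field_simp

end Multipartite

lemma IsExtremal.card_fiber_eq [Fintype V] [DecidableEq V] {G : SimpleGraph V} {x : V → ℝ}
    (hx : IsExtremal G x) {k : ℕ} (hk : 3 ≤ k) {f : V → Fin k} (hf : Function.Surjective f)
    (hadj : ∀ u v, G.Adj u v ↔ f u ≠ f v) (i j : Fin k) :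
    #{v | f v = i} = #{v | f v = j} := by
  obtain ⟨u, rfl⟩ := hf i
  obtain ⟨v, rfl⟩ := hf j
  have hdeg : G.degree u = G.degree v := by
    have hreg := hx.degree_eq (exists_triangle_of_surjective hk hf hadj)
    exact mod_cast (hreg u).trans (hreg v).symm
  have hu := degree_add_card_fiber hadj u
  have hv := degree_add_card_fiber hadj v
  lia

theorem stmt1_general {V : Type*} [Fintype V] [DecidableEq V] (G : SimpleGraph V) (hG : G ≠ ⊥) :
    qIndex G = 2 * (Fintype.card V : ℝ) * (1 - 1 / (G.cliqueNum : ℝ)) ↔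
      ((G.cliqueNum = 2 ∧ ∃ f : V → Fin 2, Function.Surjective f ∧
          ∀ u v, G.Adj u v ↔ f u ≠ f v) ∨
       (3 ≤ G.cliqueNum ∧ ∃ f : V → Fin G.cliqueNum, Function.Surjective f ∧
          (∀ u v, G.Adj u v ↔ f u ≠ f v) ∧
          ∀ i j, #{v | f v = i} = #{v | f v = j})) := by
  have : Nonempty V := (SimpleGraph.ne_bot_iff_exists_adj.1 hG).nonempty
  constructor
  · intro h
    obtain ⟨x, hx⟩ := exists_isExtremal_of_qIndex_eq h
    have hparts := exists_surjective_adj_iff_ne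
      (isCompleteMultipartite_of_posSemidef_motzkinStrausMx hx.posSemidef_motzkinStrausMx)
    obtain h2 | h3 := (two_le_cliqueNum_of_ne_bot hG).eq_or_lt'
    · exact .inl ⟨h2, h2 ▸ hparts⟩
    · obtain ⟨f, hf, hadj⟩ := hparts
      exact .inr ⟨h3, f, hf, hadj, hx.card_fiber_eq h3 hf hadj⟩
  · refine fun h ↦ (qIndex_le G).antisymm (le_qIndex_of_degree_add_degree_eq hG fun u v huv ↦ ?_)
    obtain ⟨h2, f, -, hadj⟩ | ⟨-, f, -, hadj, heq⟩ := h
    · rw [← Nat.cast_add, degree_add_degree_of_bipartition hadj huv, h2]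
      ring
    · rw [degree_eq_of_card_fiber_eq hadj heq, degree_eq_of_card_fiber_eq hadj heq,
        Fintype.card_fin]
      ring

/-- Equality in the Abreu–Nikiforov bound holds iff `G` is complete bipartite (when `ω = 2`)
or a regular complete `ω`-partite graph (when `ω ≥ 3`). -/
theorem stmt1 {V : Type*} [Fintype V] [DecidableEq V]
    (G : SimpleGraph V) (hcard : 2 ≤ Fintype.card V) (hconn : G.Connected) :
    qIndex G = 2 * (Fintype.card V : ℝ) * (1 - 1 / (G.cliqueNum : ℝ)) ↔
      ((G.cliqueNum = 2 ∧ ∃ f : V → Fin 2, Function.Surjective f ∧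
          ∀ u v, G.Adj u v ↔ f u ≠ f v) ∨
       (3 ≤ G.cliqueNum ∧ ∃ f : V → Fin G.cliqueNum, Function.Surjective f ∧
          (∀ u v, G.Adj u v ↔ f u ≠ f v) ∧
          ∀ i j : Fin G.cliqueNum,
            (Finset.univ.filter fun v => f v = i).card
              = (Finset.univ.filter fun v => f v = j).card)) := by
  have : Nontrivial V := Fintype.one_lt_card_iff_nontrivial.1 hcard
  exact stmt1_general G fun h ↦ SimpleGraph.not_connected_bot (h ▸ hconn)
end

section
/- For every finite simple connected graph G, the Q-index satisfies q(G) ≤ 2·∑_{v ∈ V(G)} (1 − 1/c(v)), where c(v) is the order of the largest clique of G containing the vertex v. -/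
open scoped Classical
open Finset

variable {V : Type*}

/-
Writing `a v = 1 - 1 / c v`, the bound says `xᵀ Q x ≤ 2 * (∑ a v) * (∑ x v ^ 2)` for all `x`. Since
`xᵀ Q x = ∑_{uv ∈ E} (x u + x v) ^ 2`, it is the case `p = 1` of
`∑_{uv ∈ E} (x u + x v) ^ 2 * p u * p v ≤ 2 * (∑ a v * p v) * (∑ p v * x v ^ 2)`
for weights `p ≥ 0`, which is proved in the manner of Motzkin and Straus. If `u` and `v` are
nonadjacent, then along the direction that exchanges weight between them with `∑ a v * p v` fixed
both sides are affine, so the inequality follows from the two endpoints, where `u` or `v` has left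
the support. This reduces to `p` supported on a clique of size `k`, where `a v ≥ 1 - 1 / k` and two
applications of Cauchy-Schwarz suffice.
-/

open Filter Topology Function Matrix

section ExchangeDir

variable {R : Type*} [CommRing R] [DecidableEq V]

/-- The direction that moves weight from `v` to `u` while preserving the `a`-weighted total
`∑ w, a w * p w` of a weight vector `p`; the Motzkin-Straus argument moves along it. -/
def exchangeDir (a : V → R) (u v : V) : V → R :=
  Pi.single u (a v) - Pi.single v (a u)

lemma neg_exchangeDir (a : V → R) (u v : V) : -exchangeDir a u v = exchangeDir a v u :=
  neg_sub _ _

lemma dotProduct_exchangeDir [Fintype V] (a : V → R) (u v : V) :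
    a ⬝ᵥ exchangeDir a u v = 0 := by
  simp [exchangeDir, dotProduct_sub, mul_comm]

lemma exchangeDir_dotProduct_mulVec_self [Fintype V] {M : Matrix V V R} {u v : V} (a : V → R)
    (huu : M u u = 0) (huv : M u v = 0) (hvu : M v u = 0) (hvv : M v v = 0) :
    exchangeDir a u v ⬝ᵥ M *ᵥ exchangeDir a u v = 0 := by
  simp [exchangeDir, mulVec_sub, sub_dotProduct, huu, huv, hvu, hvv]

lemma add_smul_exchangeDir_nonneg {K : Type*} [Field K] [LinearOrder K] [IsStrictOrderedRing K]
    {a p : V → K} {u v : V} (hau : 0 < a u) (hav : 0 ≤ a v) (huv : u ≠ v) (hp : 0 ≤ p) :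
    0 ≤ p + (p v / a u) • exchangeDir a u v := by
  intro w
  rcases eq_or_ne w v with rfl | hwv
  · simp [exchangeDir, huv, hau.ne']
  · have hdir : 0 ≤ exchangeDir a u v w := by
      rcases eq_or_ne w u with rfl | hwu <;> simp [exchangeDir, *]
    exact add_nonneg (hp w) (mul_nonneg (div_nonneg (hp v) hau.le) hdir)

lemma support_add_smul_exchangeDir_ssubset {K : Type*} [Field K] {a p : V → K} {u v : V}
    (hau : a u ≠ 0) (huv : u ≠ v) (hu : u ∈ support p) (hv : v ∈ support p) :
    support (p + (p v / a u) • exchangeDir a u v) ⊂ support p := by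
  refine Set.ssubset_iff_of_subset (fun w hw => ?_) |>.2 ⟨v, hv, ?_⟩
  · by_contra hpw
    have hwu : w ≠ u := by rintro rfl; exact hpw hu
    have hwv : w ≠ v := by rintro rfl; exact hpw hv
    exact hw (by simpa [exchangeDir, hwu, hwv] using hpw)
  · simp [exchangeDir, huv, hau]

end ExchangeDir

section QuadraticForm

variable [Fintype V]

lemma dotProduct_mulVec_nonneg_of_isotropic {R : Type*} [CommRing R] [LinearOrder R]
    [IsStrictOrderedRing R] {N : Matrix V V R} {p d : V → R} {s t : R}
    (hs : 0 < s) (ht : 0 < t) (hd : d ⬝ᵥ N *ᵥ d = 0)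
    (hadd : 0 ≤ (p + s • d) ⬝ᵥ N *ᵥ (p + s • d))
    (hsub : 0 ≤ (p - t • d) ⬝ᵥ N *ᵥ (p - t • d)) :
    0 ≤ p ⬝ᵥ N *ᵥ p := by
  have hcomb : t * ((p + s • d) ⬝ᵥ N *ᵥ (p + s • d)) + s * ((p - t • d) ⬝ᵥ N *ᵥ (p - t • d)) =
      (s + t) * (p ⬝ᵥ N *ᵥ p) := by
    simp only [mulVec_add, mulVec_sub, mulVec_smul, dotProduct_add, dotProduct_sub,
      add_dotProduct, sub_dotProduct, dotProduct_smul, smul_dotProduct, smul_eq_mul, hd]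
    ring
  refine nonneg_of_mul_nonneg_right ?_ (add_pos hs ht)
  rw [← hcomb]
  positivity

variable {K : Type*} [Field K] [LinearOrder K] [IsStrictOrderedRing K]

theorem dotProduct_mulVec_nonneg_of_isClique [DecidableEq V] {G : SimpleGraph V}
    {N : Matrix V V K} {a : V → K} (ha : ∀ v, 0 < a v)
    (hN : ∀ u v, u ≠ v → ¬G.Adj u v → exchangeDir a u v ⬝ᵥ N *ᵥ exchangeDir a u v = 0)
    (hclique : ∀ p, 0 ≤ p → G.IsClique (support p) → 0 ≤ p ⬝ᵥ N *ᵥ p)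
    {p : V → K} (hp : 0 ≤ p) : 0 ≤ p ⬝ᵥ N *ᵥ p := by
  induction hS : support p using WellFoundedLT.induction generalizing p with
  | ind S ih =>
    subst hS
    by_cases hcl : G.IsClique (support p)
    · exact hclique p hp hcl
    obtain ⟨u, hu, v, hv, huv, hadj⟩ : ∃ u ∈ support p, ∃ v ∈ support p, u ≠ v ∧ ¬G.Adj u v := by
      simpa [SimpleGraph.isClique_iff, Set.Pairwise] using hcl
    have hexchange : ∀ {u v}, u ≠ v → u ∈ support p → v ∈ support p →
        0 ≤ (p + (p v / a u) • exchangeDir a u v) ⬝ᵥ N *ᵥ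
          (p + (p v / a u) • exchangeDir a u v) := fun huv hu hv =>
      ih _ (support_add_smul_exchangeDir_ssubset (ha _).ne' huv hu hv)
        (add_smul_exchangeDir_nonneg (ha _) (ha _).le huv hp) rfl
    have hcoef : ∀ {u v}, v ∈ support p → 0 < p v / a u := fun hv =>
      div_pos ((hp _).lt_of_ne' hv) (ha _)
    have hback := hexchange huv.symm hv hu
    rw [← neg_exchangeDir, smul_neg, ← sub_eq_add_neg] at hback
    exact dotProduct_mulVec_nonneg_of_isotropic (hcoef hv) (hcoef hu) (hN u v huv hadj)
      (hexchange huv hu hv) hback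

theorem dotProduct_mulVec_le_mul_of_isClique {G : SimpleGraph V} {M : Matrix V V K}
    {a b : V → K} (ha : ∀ v, 0 < a v) (hM : ∀ u v, ¬G.Adj u v → M u v = 0)
    (hclique : ∀ p, 0 ≤ p → G.IsClique (support p) → p ⬝ᵥ M *ᵥ p ≤ (a ⬝ᵥ p) * (b ⬝ᵥ p))
    {p : V → K} (hp : 0 ≤ p) : p ⬝ᵥ M *ᵥ p ≤ (a ⬝ᵥ p) * (b ⬝ᵥ p) := by
  have hform (q : V → K) : q ⬝ᵥ (vecMulVec a b - M) *ᵥ q =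
      (a ⬝ᵥ q) * (b ⬝ᵥ q) - q ⬝ᵥ M *ᵥ q := by
    simp [sub_mulVec, vecMulVec_mulVec, dotProduct_sub, dotProduct_comm q a, mul_comm]
  rw [← sub_nonneg, ← hform]
  refine dotProduct_mulVec_nonneg_of_isClique (G := G) ha (fun u v _ hadj => ?_)
    (fun q hq hcl => ?_) hp
  · rw [hform, dotProduct_exchangeDir, zero_mul, zero_sub, neg_eq_zero]
    exact exchangeDir_dotProduct_mulVec_self a (hM _ _ G.irrefl) (hM _ _ hadj)
      (hM _ _ fun h => hadj h.symm) (hM _ _ G.irrefl)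
  · rw [hform, sub_nonneg]
    exact hclique q hq hcl

end QuadraticForm

lemma sum_mul_sum_add_sq_sum_sub_le {ι K : Type*} [Field K] [LinearOrder K]
    [IsStrictOrderedRing K] {s : Finset ι} {p : ι → K} (x : ι → K) (hp : ∀ v ∈ s, 0 ≤ p v) :
    (∑ v ∈ s, p v) * (∑ v ∈ s, p v * x v ^ 2) + (∑ v ∈ s, p v * x v) ^ 2
        - 2 * ∑ v ∈ s, (p v * x v) ^ 2 ≤
      2 * ((1 - 1 / (#s : K)) * ∑ v ∈ s, p v) * ∑ v ∈ s, p v * x v ^ 2 := by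
  rcases s.eq_empty_or_nonempty with rfl | hs
  · simp
  have hweighted : (∑ v ∈ s, p v * x v) ^ 2 ≤ (∑ v ∈ s, p v) * ∑ v ∈ s, p v * x v ^ 2 :=
    sum_sq_le_sum_mul_sum_of_sq_le_mul s hp (fun v hv => mul_nonneg (hp v hv) (sq_nonneg _))
      fun v _ => le_of_eq (by ring)
  have hcard : (0 : K) < #s := mod_cast hs.card_pos
  have hunweighted : (∑ v ∈ s, p v * x v) ^ 2 / #s ≤ ∑ v ∈ s, (p v * x v) ^ 2 :=
    (div_le_iff₀' hcard).2 sq_sum_le_card_mul_sum_sq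
  rcases Nat.eq_or_lt_of_le hs.card_pos with hone | htwo
  · obtain ⟨w, rfl⟩ := card_eq_one.1 hone.symm
    simp only [sum_singleton, card_singleton]
    exact le_of_eq (by push_cast; ring)
  · have htwo' : 0 ≤ 1 - 2 / (#s : K) := by
      rw [sub_nonneg, div_le_one hcard]
      exact_mod_cast htwo
    linear_combination 2 * hunweighted + mul_le_mul_of_nonneg_left hweighted htwo'

section EdgeForm

variable [Fintype V]

/-- The matrix whose quadratic form in the vertex weights `p` is
`∑_{uv ∈ E} (x u + x v) ^ 2 * p u * p v`, the form to which the Motzkin-Straus argument is applied.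
Its entries `x u * (x u + x v)` are the unsymmetrized version of `(x u + x v) ^ 2 / 2`. -/
noncomputable def edgeForm (G : SimpleGraph V) (x : V → ℝ) : Matrix V V ℝ :=
  Matrix.of fun u v => adjMx G u v * (x u * (x u + x v))

lemma edgeForm_apply_of_not_adj {G : SimpleGraph V} {u v : V} (x : V → ℝ) (h : ¬G.Adj u v) :
    edgeForm G x u v = 0 := by
  simp [edgeForm, adjMx, h]

lemma edgeForm_apply_of_adj {G : SimpleGraph V} {u v : V} (x : V → ℝ) (h : G.Adj u v) :
    edgeForm G x u v = x u * (x u + x v) := by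
  simp [edgeForm, adjMx, h]

lemma dotProduct_signlessLap_mulVec [DecidableEq V] (G : SimpleGraph V) (x : V → ℝ) :
    x ⬝ᵥ signlessLap G *ᵥ x = 1 ⬝ᵥ edgeForm G x *ᵥ 1 := by
  have hrow (u : V) : (signlessLap G *ᵥ x) u = ∑ v, adjMx G u v * (x u + x v) := by
    simp only [signlessLap, degMx, add_mulVec, Pi.add_apply, mulVec_diagonal, mul_add,
      sum_add_distrib, ← sum_mul]
    rfl
  calc x ⬝ᵥ signlessLap G *ᵥ x
      = ∑ u, x u * ∑ v, adjMx G u v * (x u + x v) := sum_congr rfl fun u _ => by rw [hrow]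
    _ = 1 ⬝ᵥ edgeForm G x *ᵥ 1 := by
        simp only [dotProduct, mulVec, edgeForm, of_apply, mul_sum, Pi.one_apply, one_mul, mul_one,
          mul_left_comm]

lemma dotProduct_edgeForm_mulVec_of_isClique {G : SimpleGraph V} {s : Finset V} {p : V → ℝ}
    (x : V → ℝ) (hs : G.IsClique (s : Set V)) (hps : support p ⊆ s) :
    p ⬝ᵥ edgeForm G x *ᵥ p = (∑ v ∈ s, p v) * (∑ v ∈ s, p v * x v ^ 2)
      + (∑ v ∈ s, p v * x v) ^ 2 - 2 * ∑ v ∈ s, (p v * x v) ^ 2 := by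
  have hentry : ∀ u ∈ s, ∀ v ∈ s, p u * (edgeForm G x u v * p v) =
      p u * x u ^ 2 * p v + p u * x u * (p v * x v)
        - if u = v then 2 * (p u * x u) ^ 2 else 0 := by
    intro u hu v hv
    rcases eq_or_ne u v with rfl | huv
    · rw [edgeForm_apply_of_not_adj x G.irrefl, if_pos rfl]
      ring
    · rw [edgeForm_apply_of_adj x (hs hu hv huv), if_neg huv]
      ring
  calc p ⬝ᵥ edgeForm G x *ᵥ p
      = ∑ u ∈ s, ∑ v ∈ s, p u * (edgeForm G x u v * p v) := by
        simp only [dotProduct, mulVec, mul_sum]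
        rw [← sum_subset (subset_univ s) fun u _ hu => ?_]
        · refine sum_congr rfl fun u _ => (sum_subset (subset_univ s) fun v _ hv => ?_).symm
          simp [notMem_support.1 (mt (@hps v) hv)]
        · simp [notMem_support.1 (mt (@hps u) hu)]
    _ = ∑ u ∈ s, ∑ v ∈ s, (p u * x u ^ 2 * p v + p u * x u * (p v * x v)
          - if u = v then 2 * (p u * x u) ^ 2 else 0) :=
        sum_congr rfl fun u hu => sum_congr rfl (hentry u hu)
    _ = _ := by
        simp only [sum_sub_distrib, sum_add_distrib, sum_ite_eq, ← mul_sum, ← sum_mul,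
          sum_ite_mem, inter_self]
        ring

lemma dotProduct_edgeForm_mulVec_le_of_isClique {G : SimpleGraph V} {s : Finset V}
    {a p : V → ℝ} (x : V → ℝ) (hs : G.IsClique (s : Set V)) (hps : support p ⊆ s)
    (ha : ∀ v ∈ s, 1 - 1 / (#s : ℝ) ≤ a v) (hp : 0 ≤ p) :
    p ⬝ᵥ edgeForm G x *ᵥ p ≤ 2 * (a ⬝ᵥ p) * (x ^ 2 ⬝ᵥ p) := by
  have hsum (f : V → ℝ) : f ⬝ᵥ p = ∑ v ∈ s, p v * f v := by
    simp only [dotProduct, mul_comm (f _)]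
    refine (sum_subset (subset_univ s) fun v _ hv => ?_).symm
    simp [notMem_support.1 (mt (@hps v) hv)]
  have hweight : (1 - 1 / (#s : ℝ)) * ∑ v ∈ s, p v ≤ ∑ v ∈ s, p v * a v := by
    rw [mul_comm, sum_mul]
    exact sum_le_sum fun v hv => mul_le_mul_of_nonneg_left (ha v hv) (hp v)
  have hsq : 0 ≤ ∑ v ∈ s, p v * x v ^ 2 :=
    sum_nonneg fun v _ => mul_nonneg (hp v) (sq_nonneg _)
  rw [dotProduct_edgeForm_mulVec_of_isClique x hs hps, hsum, hsum]
  refine (sum_mul_sum_add_sq_sum_sub_le x fun v _ => hp v).trans ?_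
  simp only [Pi.pow_apply]
  gcongr

lemma dotProduct_edgeForm_mulVec_le_of_pos {G : SimpleGraph V} {a p : V → ℝ} (x : V → ℝ)
    (hpos : ∀ v, 0 < a v)
    (ha : ∀ s : Finset V, G.IsClique (s : Set V) → ∀ v ∈ s, 1 - 1 / (#s : ℝ) ≤ a v)
    (hp : 0 ≤ p) : p ⬝ᵥ edgeForm G x *ᵥ p ≤ 2 * (a ⬝ᵥ p) * (x ^ 2 ⬝ᵥ p) := by
  have hfactor (q : V → ℝ) :
      2 * (a ⬝ᵥ q) * (x ^ 2 ⬝ᵥ q) = (a ⬝ᵥ q) * ((2 : ℝ) • x ^ 2 ⬝ᵥ q) := by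
    rw [smul_dotProduct, smul_eq_mul]
    ring
  rw [hfactor]
  refine dotProduct_mulVec_le_mul_of_isClique hpos
    (fun _ _ => edgeForm_apply_of_not_adj x) (fun q hq hcl => ?_) hp
  have hcl' : G.IsClique ((support q).toFinset : Set V) := by rwa [Set.coe_toFinset]
  rw [← hfactor]
  exact dotProduct_edgeForm_mulVec_le_of_isClique x hcl' (by simp) (ha _ hcl') hq

theorem dotProduct_edgeForm_mulVec_le {G : SimpleGraph V} {a p : V → ℝ} (x : V → ℝ)
    (ha : ∀ s : Finset V, G.IsClique (s : Set V) → ∀ v ∈ s, 1 - 1 / (#s : ℝ) ≤ a v)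
    (hp : 0 ≤ p) : p ⬝ᵥ edgeForm G x *ᵥ p ≤ 2 * (a ⬝ᵥ p) * (x ^ 2 ⬝ᵥ p) := by
  have hnonneg (v : V) : 0 ≤ a v := by simpa using ha {v} (by simp) v (by simp)
  -- `a` may vanish at isolated vertices, where an exchange has no endpoint; `a + ε` is positive.
  have hperturb : ∀ ε > 0, p ⬝ᵥ edgeForm G x *ᵥ p ≤
      2 * ((a + fun _ => ε) ⬝ᵥ p) * (x ^ 2 ⬝ᵥ p) := fun ε hε =>
    dotProduct_edgeForm_mulVec_le_of_pos x (fun v => add_pos_of_nonneg_of_pos (hnonneg v) hε)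
      (fun s hs v hv => (ha s hs v hv).trans (le_add_of_nonneg_right hε.le)) hp
  have hlim : Tendsto (fun ε : ℝ => 2 * ((a + fun _ => ε) ⬝ᵥ p) * (x ^ 2 ⬝ᵥ p)) (𝓝[>] 0)
      (𝓝 (2 * (a ⬝ᵥ p) * (x ^ 2 ⬝ᵥ p))) := by
    have hcont : Continuous fun ε : ℝ => 2 * ((a + fun _ => ε) ⬝ᵥ p) * (x ^ 2 ⬝ᵥ p) := by
      simp only [dotProduct, Pi.add_apply]
      fun_prop
    simpa [Pi.add_def] using (hcont.tendsto 0).mono_left nhdsWithin_le_nhds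
  exact ge_of_tendsto hlim (eventually_mem_nhdsWithin.mono hperturb)

end EdgeForm

section CliqueAt

variable [Finite V] {G : SimpleGraph V} {s : Finset V} {v : V}

lemma card_le_cliqueAt (hs : G.IsClique (s : Set V)) (hv : v ∈ s) : #s ≤ cliqueAt G v := by
  have := Fintype.ofFinite V
  refine le_csSup ⟨Fintype.card V, ?_⟩ ⟨s, ⟨hs, rfl⟩, hv⟩
  rintro _ ⟨t, ht, -⟩
  exact ht.card_eq ▸ t.card_le_univ

lemma one_sub_one_div_card_le_cliqueAt (hs : G.IsClique (s : Set V)) (hv : v ∈ s) :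
    1 - 1 / (#s : ℝ) ≤ 1 - 1 / (cliqueAt G v : ℝ) := by
  have hcard : (0 : ℝ) < #s := mod_cast card_pos.2 ⟨v, hv⟩
  have hle : (#s : ℝ) ≤ cliqueAt G v := mod_cast card_le_cliqueAt hs hv
  gcongr

end CliqueAt

lemma maxEig_le [Fintype V] [DecidableEq V] [Nonempty V] {A : Matrix V V ℝ}
    (hA : A.IsHermitian) {B : ℝ} (hB : ∀ x, x ⬝ᵥ A *ᵥ x ≤ B * (x ⬝ᵥ x)) : maxEig hA ≤ B := by
  refine ciSup_le fun i => ?_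
  let x : V → ℝ := hA.eigenvectorBasis i
  have hunit : x ⬝ᵥ x = 1 := by
    have hnorm := EuclideanSpace.real_norm_sq_eq (hA.eigenvectorBasis i)
    rw [hA.eigenvectorBasis.norm_eq_one i, one_pow] at hnorm
    simpa [dotProduct, ← sq] using hnorm.symm
  calc hA.eigenvalues i = x ⬝ᵥ A *ᵥ x := by simp [hA.eigenvalues_eq i, x]
    _ ≤ B := by simpa [hunit] using hB x

theorem stmt2_general {V : Type*} [Fintype V] [DecidableEq V] [Nonempty V]
    (G : SimpleGraph V) : qIndex G ≤ 2 * ∑ v, (1 - 1 / (cliqueAt G v : ℝ)) := by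
  refine maxEig_le _ fun x => ?_
  have hform := dotProduct_edgeForm_mulVec_le (G := G) (p := 1) x
    (fun _ hs _ hv => one_sub_one_div_card_le_cliqueAt hs hv) zero_le_one
  rw [← dotProduct_signlessLap_mulVec] at hform
  simpa [dotProduct, ← sq] using hform

/-- Vertex-localized bound for the `Q`-index: `q(G) ≤ 2 ∑_v (1 - 1/c(v))`. -/
theorem stmt2 {V : Type*} [Fintype V] [DecidableEq V]
    (G : SimpleGraph V) (hconn : G.Connected) :
    qIndex G ≤ 2 * ∑ v, (1 - 1 / (cliqueAt G v : ℝ)) := by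
  have := hconn.nonempty
  exact stmt2_general G
end

section
/- For every finite simple connected graph G, the largest adjacency eigenvalue λ₁(G) satisfies λ₁(G) ≤ ∑_{v ∈ V(G)} (1 − 1/c(v)). -/
open scoped Classical
open Finset

variable {V : Type*}

/-!
The weights `w v = 1 - 1 / c(v)` dominate `1 - 1 / #K` on every clique `K`, and this is all that is
used of them. Dividing the `(u, v)` entry of the adjacency matrix by `√(w u * w v)` gives a matrix
`M` for which the Motzkin–Straus inequality `yᵀ M y ≤ (∑ v, y v) ^ 2` holds on nonnegative vectors:
for two nonadjacent vertices, the weight of a suitable one of them can be moved onto the other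
without decreasing the form, so `y` may be assumed to be supported on a clique, where
Cauchy–Schwarz suffices. Substituting `y v = √(w v) * x v` turns the left-hand side into `xᵀ A x`,
and a second application of Cauchy–Schwarz bounds the right-hand side by
`(∑ v, w v) * ∑ v, x v ^ 2`. Since `A` has nonnegative entries, nonnegative `x` are enough to bound
the largest eigenvalue.
-/

section QuadraticForms

open scoped Matrix

variable {R : Type*} [Fintype V]

lemma dotProduct_mulVec_add_smul [CommSemiring R] {M : Matrix V V R} (hM : M.IsSymm)
    (y d : V → R) (t : R) :
    (y + t • d) ⬝ᵥ M *ᵥ (y + t • d) =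
      y ⬝ᵥ M *ᵥ y + 2 * t * (d ⬝ᵥ M *ᵥ y) + t ^ 2 * (d ⬝ᵥ M *ᵥ d) := by
  have hcomm : y ⬝ᵥ M *ᵥ d = d ⬝ᵥ M *ᵥ y := by
    rw [Matrix.dotProduct_mulVec, ← Matrix.mulVec_transpose, hM.eq, dotProduct_comm]
  simp only [Matrix.mulVec_add, Matrix.mulVec_smul, add_dotProduct, dotProduct_add,
    smul_dotProduct, dotProduct_smul, smul_eq_mul, hcomm]
  ring

lemma dotProduct_mulVec_eq_sum_offDiag [CommSemiring R] {M : Matrix V V R}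
    (hM : ∀ v, M v v = 0) {y : V → R} {K : Finset V} (hK : Function.support y ⊆ K) :
    y ⬝ᵥ M *ᵥ y = ∑ p ∈ K.offDiag, M p.1 p.2 * (y p.1 * y p.2) := by
  have hoff : ∀ v ∉ K, y v = 0 := fun v hv => Function.notMem_support.mp fun h => hv (hK h)
  calc y ⬝ᵥ M *ᵥ y = ∑ p : V × V, M p.1 p.2 * (y p.1 * y p.2) := by
        simp only [dotProduct, Matrix.mulVec, mul_sum, Fintype.sum_prod_type, mul_left_comm]
    _ = ∑ p ∈ K.offDiag, M p.1 p.2 * (y p.1 * y p.2) := by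
        refine (sum_subset (subset_univ _) fun p _ hp => ?_).symm
        by_cases h₁ : p.1 ∈ K
        · by_cases h₂ : p.2 ∈ K
          · have heq : p.1 = p.2 := by simpa [h₁, h₂] using hp
            rw [heq, hM, zero_mul]
          · rw [hoff _ h₂, mul_zero, mul_zero]
        · rw [hoff _ h₁, zero_mul, mul_zero]

lemma dotProduct_mulVec_le_abs [CommRing R] [LinearOrder R] [IsStrictOrderedRing R]
    {M : Matrix V V R} (hM : ∀ u v, 0 ≤ M u v) (x : V → R) :
    x ⬝ᵥ M *ᵥ x ≤ |x| ⬝ᵥ M *ᵥ |x| := by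
  simp only [dotProduct, Matrix.mulVec, mul_sum, Pi.abs_apply]
  refine sum_le_sum fun u _ => sum_le_sum fun v _ => ?_
  calc x u * (M u v * x v) ≤ |x u * (M u v * x v)| := le_abs_self _
    _ = |x u| * (M u v * |x v|) := by rw [abs_mul, abs_mul, abs_of_nonneg (hM u v)]

lemma maxEig_le_of_forall_nonneg [Nonempty V] [DecidableEq V] {A : Matrix V V ℝ}
    (hA : A.IsHermitian) (hA₀ : ∀ u v, 0 ≤ A u v) {b : ℝ}
    (hb : ∀ x : V → ℝ, 0 ≤ x → x ⬝ᵥ A *ᵥ x ≤ b * ∑ v, x v ^ 2) : maxEig hA ≤ b := by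
  refine ciSup_le fun i => ?_
  set x : V → ℝ := ⇑(hA.eigenvectorBasis i) with hx
  have hnorm : ∑ v, |x| v ^ 2 = 1 := by
    simp only [Pi.abs_apply, sq_abs, hx, ← EuclideanSpace.real_norm_sq_eq,
      hA.eigenvectorBasis.orthonormal.1 i, one_pow]
  calc hA.eigenvalues i = x ⬝ᵥ A *ᵥ x := by simp [hA.eigenvalues_eq, hx]
    _ ≤ |x| ⬝ᵥ A *ᵥ |x| := dotProduct_mulVec_le_abs hA₀ x
    _ ≤ b * ∑ v, |x| v ^ 2 := hb _ (abs_nonneg x)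
    _ = b := by rw [hnorm, mul_one]

end QuadraticForms

section WeightShifting

open scoped Matrix

variable {R : Type*} [CommRing R]

/-- The Zykov-type shift of a weight vector: all the weight `y` puts on `v` is moved onto `u`. It is
written as a displacement of `y` so that a quadratic form can be expanded along it. -/
def shiftWeight [DecidableEq V] (y : V → R) (v u : V) : V → R :=
  y + y v • (Pi.single u 1 - Pi.single v 1)

lemma shiftWeight_apply [DecidableEq V] {u v : V} (huv : u ≠ v) (y : V → R) (a : V) :
    shiftWeight y v u a = if a = v then 0 else if a = u then y u + y v else y a := by
  by_cases hav : a = v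
  · subst hav
    simp [shiftWeight, huv.symm]
  · by_cases hau : a = u
    · subst hau
      simp [shiftWeight, huv]
    · simp [shiftWeight, hav, hau]

lemma support_shiftWeight_ssubset [DecidableEq V] {y : V → R} {u v : V} (huv : u ≠ v)
    (hu : u ∈ Function.support y) (hv : v ∈ Function.support y) :
    Function.support (shiftWeight y v u) ⊂ Function.support y := by
  refine Set.ssubset_iff_of_subset (fun a ha => ?_) |>.mpr
    ⟨v, hv, by simp [shiftWeight_apply huv]⟩
  rw [Function.mem_support, shiftWeight_apply huv] at ha
  split_ifs at ha with hav hau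
  · exact absurd rfl ha
  · exact hau ▸ hu
  · exact ha

lemma sum_shiftWeight [Fintype V] [DecidableEq V] (y : V → R) (v u : V) :
    ∑ a, shiftWeight y v u a = ∑ a, y a := by
  simp [shiftWeight, sum_add_distrib, ← mul_sum]

variable [LinearOrder R] [IsStrictOrderedRing R]

lemma shiftWeight_nonneg [DecidableEq V] {y : V → R} (hy : 0 ≤ y) {u v : V} (huv : u ≠ v) :
    0 ≤ shiftWeight y v u := by
  intro a
  rw [shiftWeight_apply huv]
  split_ifs
  · exact le_rfl
  · exact add_nonneg (hy u) (hy v)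
  · exact hy a

variable [Fintype V]

lemma dotProduct_mulVec_le_shiftWeight [DecidableEq V] {M : Matrix V V R} (hM : M.IsSymm)
    {y : V → R} {u v : V} (hconv : 2 * M u v ≤ M u u + M v v) (hyv : 0 ≤ y v)
    (hle : (M *ᵥ y) v ≤ (M *ᵥ y) u) :
    y ⬝ᵥ M *ᵥ y ≤ shiftWeight y v u ⬝ᵥ M *ᵥ shiftWeight y v u := by
  set d : V → R := Pi.single u 1 - Pi.single v 1 with hd
  have hslope : d ⬝ᵥ M *ᵥ y = (M *ᵥ y) u - (M *ᵥ y) v := by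
    simp [hd, sub_dotProduct]
  have hcurv : d ⬝ᵥ M *ᵥ d = M u u + M v v - 2 * M u v := by
    simp only [hd, sub_dotProduct, Matrix.mulVec_sub, Matrix.mulVec_single_one,
      single_one_dotProduct, Pi.sub_apply, Matrix.col_apply, hM.apply u v]
    ring
  rw [shiftWeight, dotProduct_mulVec_add_smul hM, hslope, hcurv, add_assoc]
  exact le_add_of_nonneg_right <| add_nonneg
    (mul_nonneg (mul_nonneg zero_le_two hyv) (sub_nonneg.mpr hle))
    (mul_nonneg (sq_nonneg _) (sub_nonneg.mpr hconv))

theorem exists_isClique_support_dotProduct_mulVec_le {G : SimpleGraph V} {M : Matrix V V R}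
    (hM : M.IsSymm) (hconv : ∀ u v, u ≠ v → ¬G.Adj u v → 2 * M u v ≤ M u u + M v v)
    {y : V → R} (hy : 0 ≤ y) :
    ∃ z : V → R, 0 ≤ z ∧ ∑ v, z v = ∑ v, y v ∧ G.IsClique (Function.support z) ∧
      y ⬝ᵥ M *ᵥ y ≤ z ⬝ᵥ M *ᵥ z := by
  induction hS : Function.support y using WellFoundedLT.induction generalizing y with
  | ind S ih =>
    subst hS
    by_cases hclique : G.IsClique (Function.support y)
    · exact ⟨y, hy, rfl, hclique, le_rfl⟩
    obtain ⟨u, hu, v, hv, huv, hadj, hle⟩ : ∃ u ∈ Function.support y, ∃ v ∈ Function.support y,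
        u ≠ v ∧ ¬G.Adj u v ∧ (M *ᵥ y) v ≤ (M *ᵥ y) u := by
      simp only [SimpleGraph.isClique_iff, Set.Pairwise, not_forall] at hclique
      obtain ⟨u, hu, v, hv, huv, hadj⟩ := hclique
      rcases le_total ((M *ᵥ y) v) ((M *ᵥ y) u) with hle | hle
      · exact ⟨u, hu, v, hv, huv, hadj, hle⟩
      · exact ⟨v, hv, u, hu, huv.symm, fun h => hadj h.symm, hle⟩
    obtain ⟨z, hz, hsum, hzclique, hyz⟩ := ih _ (support_shiftWeight_ssubset huv hu hv)
      (shiftWeight_nonneg hy huv) rfl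
    exact ⟨z, hz, hsum.trans (sum_shiftWeight y v u), hzclique,
      (dotProduct_mulVec_le_shiftWeight hM (hconv u v huv hadj) (hy v) hle).trans hyz⟩

end WeightShifting

section TuranWeights

open scoped Matrix

lemma sum_offDiag_mul_le {R ι : Type*} [Field R] [LinearOrder R] [IsStrictOrderedRing R]
    (K : Finset ι) (y : ι → R) :
    ∑ p ∈ K.offDiag, y p.1 * y p.2 ≤ (1 - 1 / (#K : R)) * (∑ v ∈ K, y v) ^ 2 := by
  have hsplit : (∑ v ∈ K, y v) ^ 2 = ∑ v ∈ K, y v ^ 2 + ∑ p ∈ K.offDiag, y p.1 * y p.2 := by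
    rw [sq, sum_mul_sum, ← sum_product', ← diag_union_offDiag,
      sum_union (disjoint_diag_offDiag K), sum_diag]
    simp only [sq]
  have hcauchy : (∑ v ∈ K, y v) ^ 2 / #K ≤ ∑ v ∈ K, y v ^ 2 :=
    div_le_of_le_mul₀ (Nat.cast_nonneg _) (sum_nonneg fun v _ => sq_nonneg (y v))
      (sq_sum_le_card_mul_sum_sq.trans_eq (mul_comm _ _))
  calc ∑ p ∈ K.offDiag, y p.1 * y p.2 = (∑ v ∈ K, y v) ^ 2 - ∑ v ∈ K, y v ^ 2 := by
        rw [hsplit, add_sub_cancel_left]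
    _ ≤ (∑ v ∈ K, y v) ^ 2 - (∑ v ∈ K, y v) ^ 2 / #K := sub_le_sub_left hcauchy _
    _ = (1 - 1 / (#K : R)) * (∑ v ∈ K, y v) ^ 2 := by ring

/-- A vertex weight is a Turán weight when on every clique `K` it is at least the Turán density
`1 - 1 / #K`; these are the weights for which a localized Motzkin–Straus inequality holds. -/
def IsTuranWeight (G : SimpleGraph V) (w : V → ℝ) : Prop :=
  ∀ ⦃K : Finset V⦄, G.IsClique K → ∀ v ∈ K, 1 - 1 / (#K : ℝ) ≤ w v

/-- The adjacency matrix scaled to have entry `1 / √(w u * w v)` at an edge `uv`, the form to which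
the localized Motzkin–Straus inequality applies. -/
noncomputable def weightedAdj (G : SimpleGraph V) (w : V → ℝ) : Matrix V V ℝ :=
  Matrix.of fun u v => if G.Adj u v then (√(w u * w v))⁻¹ else 0

lemma weightedAdj_isSymm (G : SimpleGraph V) (w : V → ℝ) : (weightedAdj G w).IsSymm := by
  ext u v
  simp [weightedAdj, G.adj_comm, mul_comm]

lemma weightedAdj_of_not_adj {G : SimpleGraph V} (w : V → ℝ) {u v : V} (h : ¬G.Adj u v) :
    weightedAdj G w u v = 0 := by
  simp [weightedAdj, h]

namespace IsTuranWeight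

variable {G : SimpleGraph V} {w : V → ℝ}

lemma nonneg (hw : IsTuranWeight G w) (v : V) : 0 ≤ w v := by
  simpa using hw (K := {v}) (by simp) v (mem_singleton_self v)

lemma pos_of_adj (hw : IsTuranWeight G w) {u v : V} (h : G.Adj u v) : 0 < w u := by
  have hpair : G.IsClique ({u, v} : Finset V) := by
    simpa [SimpleGraph.isClique_pair] using fun _ => h
  have hhalf := hw hpair u (mem_insert_self u {v})
  rw [card_pair h.ne] at hhalf
  norm_num at hhalf
  linarith

lemma weightedAdj_le (hw : IsTuranWeight G w) {K : Finset V} (hK : G.IsClique K) {p : V × V}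
    (hp : p ∈ K.offDiag) : weightedAdj G w p.1 p.2 ≤ (1 - 1 / (#K : ℝ))⁻¹ := by
  obtain ⟨hu, hv, huv⟩ := mem_offDiag.mp hp
  have hcard : (1 : ℝ) < #K := by exact_mod_cast one_lt_card.mpr ⟨p.1, hu, p.2, hv, huv⟩
  have hpos : 0 < 1 - 1 / (#K : ℝ) :=
    sub_pos.mpr ((div_lt_one (zero_lt_one.trans hcard)).mpr hcard)
  have hsqrt : 1 - 1 / (#K : ℝ) ≤ √(w p.1 * w p.2) := by
    refine Real.le_sqrt_of_sq_le ?_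
    rw [sq]
    exact mul_le_mul (hw hK _ hu) (hw hK _ hv) hpos.le (hw.nonneg _)
  simpa [weightedAdj, hK hu hv huv] using inv_anti₀ hpos hsqrt

variable [Fintype V]

lemma dotProduct_weightedAdj_mulVec_le_of_isClique (hw : IsTuranWeight G w) {y : V → ℝ}
    (hy : 0 ≤ y) (hclique : G.IsClique (Function.support y)) :
    y ⬝ᵥ weightedAdj G w *ᵥ y ≤ (∑ v, y v) ^ 2 := by
  set K : Finset V := (Function.support y).toFinset with hKdef
  have hK : (K : Set V) = Function.support y := Set.coe_toFinset _
  set q : ℝ := 1 - 1 / #K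
  have hq : 0 ≤ q := Nat.one_sub_one_div_cast_nonneg #K
  have hsum : ∑ v ∈ K, y v = ∑ v, y v :=
    sum_subset (subset_univ K) fun v _ hv => by simpa [hKdef] using hv
  -- For `#K = 1` we have `q = q⁻¹ = 0` and `K.offDiag = ∅`, so `q` need not be nonzero below.
  calc y ⬝ᵥ weightedAdj G w *ᵥ y
      = ∑ p ∈ K.offDiag, weightedAdj G w p.1 p.2 * (y p.1 * y p.2) :=
        dotProduct_mulVec_eq_sum_offDiag (fun v => weightedAdj_of_not_adj w (G.irrefl)) hK.ge
    _ ≤ ∑ p ∈ K.offDiag, q⁻¹ * (y p.1 * y p.2) :=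
        sum_le_sum fun p hp => mul_le_mul_of_nonneg_right
          (hw.weightedAdj_le (hK ▸ hclique) hp) (mul_nonneg (hy p.1) (hy p.2))
    _ = q⁻¹ * ∑ p ∈ K.offDiag, y p.1 * y p.2 := (mul_sum ..).symm
    _ ≤ q⁻¹ * (q * (∑ v ∈ K, y v) ^ 2) :=
        mul_le_mul_of_nonneg_left (sum_offDiag_mul_le K y) (inv_nonneg.mpr hq)
    _ = q⁻¹ * q * (∑ v, y v) ^ 2 := by rw [hsum, mul_assoc]
    _ ≤ (∑ v, y v) ^ 2 := mul_le_of_le_one_left (sq_nonneg _) inv_mul_le_one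

theorem dotProduct_weightedAdj_mulVec_le (hw : IsTuranWeight G w) {y : V → ℝ} (hy : 0 ≤ y) :
    y ⬝ᵥ weightedAdj G w *ᵥ y ≤ (∑ v, y v) ^ 2 := by
  have hzero : ∀ u v, u ≠ v → ¬G.Adj u v →
      2 * weightedAdj G w u v ≤ weightedAdj G w u u + weightedAdj G w v v := fun u v _ hadj => by
    simp [weightedAdj_of_not_adj w hadj, weightedAdj_of_not_adj w G.irrefl]
  obtain ⟨z, hz, hsum, hclique, hyz⟩ :=
    exists_isClique_support_dotProduct_mulVec_le (weightedAdj_isSymm G w) hzero hy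
  exact hsum ▸ hyz.trans (hw.dotProduct_weightedAdj_mulVec_le_of_isClique hz hclique)

lemma dotProduct_adjMx_mulVec_eq (hw : IsTuranWeight G w) (x : V → ℝ) :
    x ⬝ᵥ adjMx G *ᵥ x =
      (fun v => √(w v) * x v) ⬝ᵥ weightedAdj G w *ᵥ fun v => √(w v) * x v := by
  simp only [dotProduct, Matrix.mulVec, mul_sum]
  refine sum_congr rfl fun u _ => sum_congr rfl fun v _ => ?_
  by_cases h : G.Adj u v
  · have hu : √(w u) ≠ 0 := (Real.sqrt_pos.mpr (hw.pos_of_adj h)).ne'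
    have hv : √(w v) ≠ 0 := (Real.sqrt_pos.mpr (hw.pos_of_adj h.symm)).ne'
    simp only [adjMx, weightedAdj, Matrix.of_apply, h, if_true, Real.sqrt_mul (hw.nonneg u)]
    field_simp
  · simp [adjMx, weightedAdj, h]

lemma dotProduct_adjMx_mulVec_le (hw : IsTuranWeight G w) {x : V → ℝ} (hx : 0 ≤ x) :
    x ⬝ᵥ adjMx G *ᵥ x ≤ (∑ v, w v) * ∑ v, x v ^ 2 := by
  calc x ⬝ᵥ adjMx G *ᵥ x ≤ (∑ v, √(w v) * x v) ^ 2 :=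
        hw.dotProduct_adjMx_mulVec_eq x ▸ hw.dotProduct_weightedAdj_mulVec_le
          fun v => mul_nonneg (Real.sqrt_nonneg _) (hx v)
    _ ≤ (∑ v, √(w v) ^ 2) * ∑ v, x v ^ 2 := sum_mul_sq_le_sq_mul_sq _ _ _
    _ = (∑ v, w v) * ∑ v, x v ^ 2 := by simp only [Real.sq_sqrt (hw.nonneg _)]

theorem lambda1_le [Nonempty V] [DecidableEq V] (hw : IsTuranWeight G w) :
    lambda1 G ≤ ∑ v, w v := by
  refine maxEig_le_of_forall_nonneg _ (fun u v => ?_) fun x => hw.dotProduct_adjMx_mulVec_le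
  rw [adjMx, Matrix.of_apply]
  split_ifs <;> norm_num

end IsTuranWeight

lemma card_le_cliqueAt_s6 [Finite V] {G : SimpleGraph V} {K : Finset V} (hK : G.IsClique K) {v : V}
    (hv : v ∈ K) : #K ≤ cliqueAt G v := by
  have := Fintype.ofFinite V
  refine le_csSup ⟨Fintype.card V, ?_⟩ ⟨K, ⟨hK, rfl⟩, hv⟩
  rintro n ⟨s, hs, -⟩
  exact hs.card_eq ▸ card_le_univ s

lemma isTuranWeight_cliqueAt [Finite V] (G : SimpleGraph V) :
    IsTuranWeight G fun v => 1 - 1 / (cliqueAt G v : ℝ) := fun _ hK v hv =>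
  sub_le_sub_left (one_div_le_one_div_of_le (by exact_mod_cast card_pos.mpr ⟨v, hv⟩)
    (by exact_mod_cast card_le_cliqueAt_s6 hK hv)) 1

end TuranWeights

theorem stmt6_general {V : Type*} [Fintype V] [DecidableEq V] [Nonempty V] (G : SimpleGraph V) :
    lambda1 G ≤ ∑ v, (1 - 1 / (cliqueAt G v : ℝ)) :=
  (isTuranWeight_cliqueAt G).lambda1_le

/-- Vertex-localized spectral Turán theorem: `λ₁(G) ≤ ∑_v (1 - 1/c(v))`. -/
theorem stmt6 {V : Type*} [Fintype V] [DecidableEq V]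
    (G : SimpleGraph V) (hconn : G.Connected) :
    lambda1 G ≤ ∑ v, (1 - 1 / (cliqueAt G v : ℝ)) :=
  have := hconn.nonempty
  stmt6_general G
end
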